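/- Let n ≥ 2 and let K ⊆ ℝⁿ be a bounded measurable set that is not contained in any 1-dimensional linear subspace. Then V(K) · V(K^◇) ≤ ω_n², where K^◇ = {x ∈ ℝⁿ : [x,y] ≤ 1 for all y ∈ K} is the sine polar body of K. -/

import Mathlib

/-!
Write `K` and `L` for compact sets with `[x,y] ≤ 1` whenever `x ∈ K`, `y ∈ L`. By inner regularity
of Lebesgue measure it suffices to show `V(K) V(L) ≤ ω_n²` for all such pairs with `K` and `L`
compact (`volume_mul_volume_le_of_isCompact`).

The tool is a variant of Steiner symmetrization, `fiberSymm`: each fibre `A` of a set on a line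
parallel to `u` is replaced by `(A - A) / 2`. It preserves compactness and containment in centred
balls, and does not decrease volume, by Fubini and the inequality `|(A - A) / 2| ≥ |A|` for compact
`A ⊆ ℝ`. Applied to `K` and `L` in the same direction, it preserves the condition `[x,y] ≤ 1`
(`sinePair_fiberSymm_le_one`), because `[p + s u, q + t u]² = [p,q]² + |t p - s q|²` for
`p, q ⊥ u` is convex and even in `(s, t)`.

The pairs `(K, L)` with volumes bounded below and both sets inside fixed balls form a compact set
in the hyperspace of nonempty compact sets (`isCompact_admissible`), so one of them has minimal
circumradius `R` of `K`. If `K` missed a point of the sphere of radius `R`, finitely many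
symmetrizations would push it off the whole sphere (`exists_admissible_avoiding_sphere`) and
decrease `R`. Hence the minimizing `K` contains the sphere of radius `R`. As `n ≥ 2`, each `y ∈ L`
is orthogonal to some point of that sphere, so `R ‖y‖ ≤ 1`. Therefore `K` and `L` lie in balls of
radii `R` and `1 / R`, and the product of the volumes of these balls is `ω_n²`.
-/

open MeasureTheory Metric Set
open scoped RealInnerProductSpace ENNReal

noncomputable section

/-- `[x,y]`: the area of the parallelogram spanned by `x` and `y`. -/
def sinePair {n : ℕ} (x y : EuclideanSpace ℝ (Fin n)) : ℝ :=
  Real.sqrt (‖x‖ ^ 2 * ‖y‖ ^ 2 - ⟪x, y⟫ ^ 2)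

/-- `ω_q = π^{q/2}/Γ(1+q/2)`. -/
def omegaVol (q : ℝ) : ℝ := Real.pi ^ (q / 2) / Real.Gamma (1 + q / 2)

/-- The rotation invariant probability measure on the unit sphere `S^{n-1}`. -/
def sphereProb (n : ℕ) : Measure (sphere (0 : EuclideanSpace ℝ (Fin n)) 1) :=
  ((volume : Measure (EuclideanSpace ℝ (Fin n))).toSphere univ)⁻¹ •
    (volume : Measure (EuclideanSpace ℝ (Fin n))).toSphere

/-- The radial function of a set star-shaped about the origin. -/
def radialFn {n : ℕ} (K : Set (EuclideanSpace ℝ (Fin n))) (u : EuclideanSpace ℝ (Fin n)) : ℝ :=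
  sSup {r : ℝ | 0 ≤ r ∧ r • u ∈ K}

/-- `K` is star-shaped about the origin. -/
def IsStarShaped {n : ℕ} (K : Set (EuclideanSpace ℝ (Fin n))) : Prop :=
  0 ∈ K ∧ ∀ x ∈ K, ∀ t : ℝ, 0 ≤ t → t ≤ 1 → t • x ∈ K

/-- `K` is a star body: star-shaped about the origin, with radial function positive and
continuous on the unit sphere, and `K = {r • u : u ∈ S^{n-1}, 0 ≤ r ≤ ρ_K(u)}`. -/
def IsStarBody {n : ℕ} (K : Set (EuclideanSpace ℝ (Fin n))) : Prop :=
  IsStarShaped K ∧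
  (∀ u ∈ sphere (0 : EuclideanSpace ℝ (Fin n)) 1, 0 < radialFn K u) ∧
  ContinuousOn (radialFn K) (sphere (0 : EuclideanSpace ℝ (Fin n)) 1) ∧
  ∀ u ∈ sphere (0 : EuclideanSpace ℝ (Fin n)) 1, ∀ r : ℝ, 0 ≤ r →
    (r • u ∈ K ↔ r ≤ radialFn K u)

/-- The constant `c̃_{n,p}`. -/
def tildeC (n : ℕ) (p : ℝ) : ℝ :=
  ((n : ℝ) - 1) * omegaVol ((n : ℝ) - 1) * omegaVol ((n : ℝ) + p - 2) /
    (((n : ℝ) + p) * omegaVol (n : ℝ) * omegaVol ((n : ℝ) + p - 3))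

/-- The polar body `Λ_p°K` of the `L_p`-sine centroid body of `K`. -/
def sineCentroidPolar (n : ℕ) (p : ℝ) (K : Set (EuclideanSpace ℝ (Fin n))) :
    Set (EuclideanSpace ℝ (Fin n)) :=
  {x | ∫ y in K, sinePair x y ^ p ≤ tildeC n p * (volume K).toReal}

/-- The sine polar body `K^◇`. -/
def sinePolar {n : ℕ} (K : Set (EuclideanSpace ℝ (Fin n))) : Set (EuclideanSpace ℝ (Fin n)) :=
  {x | ∀ y ∈ K, sinePair x y ≤ 1}

/-- The closed solid cylinder `C⁻(u,r)`. -/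
def solidCylinder {n : ℕ} (u : EuclideanSpace ℝ (Fin n)) (r : ℝ) :
    Set (EuclideanSpace ℝ (Fin n)) := {x | sinePair x u ≤ r}

/-- `K ∈ C_e^n`: an origin-symmetric convex body that is an intersection of closed solid
cylinders. -/
def IsCylBody {n : ℕ} (K : Set (EuclideanSpace ℝ (Fin n))) : Prop :=
  IsCompact K ∧ Convex ℝ K ∧ (interior K).Nonempty ∧ (∀ x ∈ K, -x ∈ K) ∧
  ∃ I : Set (EuclideanSpace ℝ (Fin n) × ℝ),
    (∀ c ∈ I, c.1 ∈ sphere (0 : EuclideanSpace ℝ (Fin n)) 1 ∧ 0 < c.2) ∧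
    K = ⋂ c ∈ I, solidCylinder c.1 c.2

/-- The cylindrical hull of a set. -/
def cylHull {n : ℕ} (E : Set (EuclideanSpace ℝ (Fin n))) : Set (EuclideanSpace ℝ (Fin n)) :=
  ⋂ c ∈ {c : EuclideanSpace ℝ (Fin n) × ℝ |
      c.1 ∈ sphere (0 : EuclideanSpace ℝ (Fin n)) 1 ∧ 0 < c.2 ∧ E ⊆ solidCylinder c.1 c.2},
    solidCylinder c.1 c.2

/-- The cylindrical support function `c_K`. -/
def cylSupport {n : ℕ} (K : Set (EuclideanSpace ℝ (Fin n))) (x : EuclideanSpace ℝ (Fin n)) : ℝ :=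
  sSup ((fun y => sinePair x y) '' K)

/-- The support function `h_K`. -/
def suppFn {n : ℕ} (K : Set (EuclideanSpace ℝ (Fin n))) (x : EuclideanSpace ℝ (Fin n)) : ℝ :=
  sSup ((fun y => ⟪x, y⟫) '' K)

open TopologicalSpace

/-! ### Fibrewise symmetrization -/

/-- The fibrewise symmetrization of `K` in the direction of a unit vector `u`: the fibre
`A = {s | w + s • u ∈ K}` over each `w ⊥ u` is replaced by `(A - A) / 2`. For compact convex
`K` this is the Steiner symmetral. It is written as the image of `{(y, z) ∈ K × K | y - z ∈ ℝ u}` under a continuous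
map, so that compactness is inherited from `K`; see `mem_fiberSymm` for the description by
fibres. -/
def fiberSymm {n : ℕ} (u : EuclideanSpace ℝ (Fin n)) (K : Set (EuclideanSpace ℝ (Fin n))) :
    Set (EuclideanSpace ℝ (Fin n)) :=
  (fun p : EuclideanSpace ℝ (Fin n) × EuclideanSpace ℝ (Fin n) =>
      p.1 - (⟪u, p.1 + p.2⟫ / 2) • u) ''
    ((K ×ˢ K) ∩ {p | p.1 - p.2 = ⟪u, p.1 - p.2⟫ • u})

theorem mem_fiberSymm {n : ℕ} {u : EuclideanSpace ℝ (Fin n)} (hu : ‖u‖ = 1)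
    {K : Set (EuclideanSpace ℝ (Fin n))} {x : EuclideanSpace ℝ (Fin n)} :
    x ∈ fiberSymm u K ↔ ∃ (w : EuclideanSpace ℝ (Fin n)) (s t : ℝ), ⟪u, w⟫ = 0 ∧
      w + s • u ∈ K ∧ w + t • u ∈ K ∧ x = w + ((s - t) / 2) • u := by
  have huu : ⟪u, u⟫ = 1 := by rw [real_inner_self_eq_norm_sq, hu]; norm_num
  constructor
  · rintro ⟨⟨y, z⟩, ⟨⟨hy, hz⟩, hyz⟩, rfl⟩
    simp only [mem_ofPred_eq] at hyz hy hz
    refine ⟨y - ⟪u, y⟫ • u, ⟪u, y⟫, ⟪u, z⟫, ?_, ?_, ?_, ?_⟩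
    · rw [inner_sub_right, inner_smul_right, huu]; ring
    · simpa using hy
    · have : y - ⟪u, y⟫ • u + ⟪u, z⟫ • u = z := by
        rw [inner_sub_right, sub_smul] at hyz
        have h2 : y = z + (⟪u, y⟫ • u - ⟪u, z⟫ • u) := by rw [← hyz]; abel
        nth_rewrite 1 [h2]
        abel
      rwa [this]
    · simp only [inner_add_right]
      module
  · rintro ⟨w, s, t, hw, hs, ht, rfl⟩
    refine ⟨(w + s • u, w + t • u), ⟨⟨hs, ht⟩, ?_⟩, ?_⟩
    · simp only [mem_ofPred_eq, inner_sub_right, inner_add_right, inner_smul_right, huu, hw]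
      module
    · simp only [inner_add_right, inner_smul_right, huu, hw]
      module

theorem isCompact_fiberSymm {n : ℕ} (u : EuclideanSpace ℝ (Fin n))
    {K : Set (EuclideanSpace ℝ (Fin n))} (hK : IsCompact K) : IsCompact (fiberSymm u K) := by
  refine ((hK.prod hK).inter_right ?_).image ?_
  · exact isClosed_eq (by fun_prop) (by fun_prop)
  · fun_prop

theorem nonempty_fiberSymm {n : ℕ} (u : EuclideanSpace ℝ (Fin n))
    {K : Set (EuclideanSpace ℝ (Fin n))} (hK : K.Nonempty) : (fiberSymm u K).Nonempty := by
  obtain ⟨x, hx⟩ := hK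
  exact ⟨_, (x, x), ⟨⟨hx, hx⟩, by simp⟩, rfl⟩

theorem norm_add_smul_sq {n : ℕ} {u w : EuclideanSpace ℝ (Fin n)} (hu : ‖u‖ = 1)
    (hw : ⟪u, w⟫ = 0) (s : ℝ) : ‖w + s • u‖ ^ 2 = ‖w‖ ^ 2 + s ^ 2 := by
  rw [norm_add_sq_real, inner_smul_right, real_inner_comm, hw, norm_smul, hu]
  simp

theorem fiberSymm_subset_closedBall {n : ℕ} {u : EuclideanSpace ℝ (Fin n)} (hu : ‖u‖ = 1)
    {K : Set (EuclideanSpace ℝ (Fin n))} {r : ℝ} (hK : K ⊆ closedBall 0 r) :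
    fiberSymm u K ⊆ closedBall 0 r := by
  intro x hx
  obtain ⟨w, s, t, hw, hs, ht, rfl⟩ := (mem_fiberSymm hu).1 hx
  have hs := mem_closedBall_zero_iff.1 (hK hs)
  have ht := mem_closedBall_zero_iff.1 (hK ht)
  have hr : 0 ≤ r := (norm_nonneg _).trans hs
  have hs2 := pow_le_pow_left₀ (norm_nonneg _) hs 2
  have ht2 := pow_le_pow_left₀ (norm_nonneg _) ht 2
  rw [norm_add_smul_sq hu hw] at hs2 ht2
  rw [mem_closedBall_zero_iff]
  refine le_of_sq_le_sq ?_ hr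
  rw [norm_add_smul_sq hu hw]
  nlinarith [sq_nonneg (s + t)]

/-- A point of the symmetral on the circumscribed sphere is a midpoint of two points of the ball,
which by strict convexity coincide: both the point and its mirror image in `u^⊥` lie in `K`. -/
theorem mem_of_mem_fiberSymm_of_norm_eq {n : ℕ} {u : EuclideanSpace ℝ (Fin n)} (hu : ‖u‖ = 1)
    {K : Set (EuclideanSpace ℝ (Fin n))} {r : ℝ} (hK : K ⊆ closedBall 0 r)
    {x : EuclideanSpace ℝ (Fin n)} (hx : x ∈ fiberSymm u K) (hxr : ‖x‖ = r) :
    x ∈ K ∧ x - (2 * ⟪u, x⟫) • u ∈ K := by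
  have huu : ⟪u, u⟫ = 1 := by rw [real_inner_self_eq_norm_sq, hu]; norm_num
  obtain ⟨w, s, t, hw, hs, ht, rfl⟩ := (mem_fiberSymm hu).1 hx
  have hs' := mem_closedBall_zero_iff.1 (hK hs)
  have ht' := mem_closedBall_zero_iff.1 (hK ht)
  have hs2 := pow_le_pow_left₀ (norm_nonneg _) hs' 2
  have ht2 := pow_le_pow_left₀ (norm_nonneg _) ht' 2
  rw [← hxr, norm_add_smul_sq hu hw, norm_add_smul_sq hu hw] at hs2 ht2
  have h0 : s + t = 0 := by
    have : (s + t) ^ 2 = 0 := le_antisymm (by nlinarith) (sq_nonneg _)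
    exact pow_eq_zero_iff (two_ne_zero) |>.1 this
  obtain rfl : t = -s := by linarith
  rw [inner_add_right, inner_smul_right, hw, huu]
  constructor
  · convert hs using 2
    module
  · convert ht using 1
    module

theorem sinePair_le_one_iff {n : ℕ} (x y : EuclideanSpace ℝ (Fin n)) :
    sinePair x y ≤ 1 ↔ ‖x‖ ^ 2 * ‖y‖ ^ 2 - ⟪x, y⟫ ^ 2 ≤ 1 := by
  rw [sinePair, Real.sqrt_le_one]

/-- Symmetrizing `K` and `L` in the same direction preserves `[x,y] ≤ 1`. For `p, q ⊥ u` one has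
`[p + s u, q + t u]² = [p,q]² + |t p - s q|²`, a convex even function of `(s, t)`. -/
theorem sinePair_fiberSymm_le_one {n : ℕ} {u : EuclideanSpace ℝ (Fin n)} (hu : ‖u‖ = 1)
    {K L : Set (EuclideanSpace ℝ (Fin n))} (h : ∀ x ∈ K, ∀ y ∈ L, sinePair x y ≤ 1) :
    ∀ x ∈ fiberSymm u K, ∀ y ∈ fiberSymm u L, sinePair x y ≤ 1 := by
  intro x hx y hy
  obtain ⟨p, s₁, s₂, hp, hs₁, hs₂, rfl⟩ := (mem_fiberSymm hu).1 hx
  obtain ⟨q, t₁, t₂, hq, ht₁, ht₂, rfl⟩ := (mem_fiberSymm hu).1 hy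
  have hin : ∀ s t : ℝ, ⟪p + s • u, q + t • u⟫ = ⟪p, q⟫ + s * t := by
    intro s t
    have hp' : ⟪p, u⟫ = 0 := by rw [real_inner_comm]; exact hp
    simp [inner_add_left, inner_add_right, inner_smul_left, inner_smul_right, hq, hu, hp']
    ring
  have h₁ := (sinePair_le_one_iff _ _).1 (h _ hs₁ _ ht₁)
  have h₂ := (sinePair_le_one_iff _ _).1 (h _ hs₂ _ ht₂)
  rw [sinePair_le_one_iff]
  rw [hin, norm_add_smul_sq hu hp, norm_add_smul_sq hu hq] at *
  have hN := sq_nonneg ‖(t₁ + t₂) • p - (s₁ + s₂) • q‖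
  rw [norm_sub_sq_real, norm_smul, norm_smul, mul_pow, mul_pow, inner_smul_left,
    inner_smul_right, Real.norm_eq_abs, Real.norm_eq_abs, sq_abs, sq_abs] at hN
  simp only [conj_trivial] at hN
  nlinarith

open scoped Pointwise in
/-- One-dimensional Brunn–Minkowski for `A` and `-A`: the sets `(A - min A) / 2` and
`(A - max A) / 2` are contained in `(A - A) / 2` and meet at most at `0`. -/
theorem volume_le_half_difference {A : Set ℝ} (hA : IsCompact A) :
    volume A ≤ volume ((fun p : ℝ × ℝ => (p.1 - p.2) / 2) '' (A ×ˢ A)) := by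
  rcases A.eq_empty_or_nonempty with rfl | hne
  · simp
  obtain ⟨m, hm, hmA⟩ := hA.exists_isLeast hne
  obtain ⟨M, hM, hMA⟩ := hA.exists_isGreatest hne
  set B : ℝ → Set ℝ := fun c => (fun x => (1 / 2 : ℝ) * x) '' ((fun x => x - c) '' A) with hB
  have hvol : ∀ c, volume (B c) = ENNReal.ofReal (1 / 2) * volume A := by
    intro c
    have h1 : volume ((fun x => x - c) '' A) = volume A := by
      simp only [sub_eq_add_neg, image_add_right]
      simp
    have h2 := Measure.addHaar_smul (volume : Measure ℝ) (1 / 2) ((fun x => x - c) '' A)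
    rw [h1, Module.finrank_self, pow_one, abs_of_pos (by norm_num)] at h2
    exact h2
  have hBc : ∀ c, IsCompact (B c) := fun c => (hA.image (by fun_prop)).image (by fun_prop)
  have hdisj : AEDisjoint volume (B m) (B M) := by
    refine measure_mono_null (t := {0}) ?_ (by simp)
    rintro x ⟨⟨_, ⟨y, hy, rfl⟩, rfl⟩, ⟨_, ⟨z, hz, rfl⟩, hxz⟩⟩
    have h1 := hmA hy
    have h2 := hMA hz
    simp only at hxz
    simp only [mem_singleton_iff]
    linarith
  have hsub : B m ∪ B M ⊆ (fun p : ℝ × ℝ => (p.1 - p.2) / 2) '' (A ×ˢ A) := by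
    rintro x (⟨_, ⟨y, hy, rfl⟩, rfl⟩ | ⟨_, ⟨y, hy, rfl⟩, rfl⟩)
    · exact ⟨(y, m), ⟨hy, hm⟩, by simp only; ring⟩
    · exact ⟨(y, M), ⟨hy, hM⟩, by simp only; ring⟩
  calc volume A = volume (B m) + volume (B M) := by
        rw [hvol, hvol, ← add_mul, ← ENNReal.ofReal_add (by norm_num) (by norm_num)]
        norm_num
    _ = volume (B m ∪ B M) :=
        (measure_union₀ (hBc M).measurableSet.nullMeasurableSet hdisj).symm
    _ ≤ _ := measure_mono hsub

/-- The orthogonal splitting `ℝ × u^⊥ → ℝⁿ` preserves volume, which makes Fubini along the lines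
parallel to `u` available. -/
theorem measurePreserving_line_add {n : ℕ} {u : EuclideanSpace ℝ (Fin n)} (hu : ‖u‖ = 1) :
    MeasurePreserving (fun p : ℝ × (Submodule.span ℝ {u})ᗮ =>
      (p.2 : EuclideanSpace ℝ (Fin n)) + p.1 • u) := by
  have h1 : MeasurePreserving (Prod.map (LinearIsometryEquiv.toSpanUnitSingleton (𝕜 := ℝ) u hu)
      (id : (Submodule.span ℝ {u})ᗮ → (Submodule.span ℝ {u})ᗮ)) :=
    (LinearIsometryEquiv.measurePreserving _).prod (MeasurePreserving.id _)
  have h2 := WithLp.volume_preserving_toLp (Submodule.span ℝ {u}) (Submodule.span ℝ {u})ᗮ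
  have h3 := (Submodule.span ℝ {u}).orthogonalDecomposition.symm.measurePreserving
  have := h3.comp (h2.comp h1)
  convert this using 1
  ext1 p
  change _ = ((LinearIsometryEquiv.toSpanUnitSingleton (𝕜 := ℝ) u hu p.1 :
    Submodule.span ℝ {u}) : EuclideanSpace ℝ (Fin n)) + (p.2 : EuclideanSpace ℝ (Fin n))
  rw [LinearIsometryEquiv.toSpanUnitSingleton_apply, add_comm]

theorem volume_le_volume_fiberSymm {n : ℕ} {u : EuclideanSpace ℝ (Fin n)} (hu : ‖u‖ = 1)
    {K : Set (EuclideanSpace ℝ (Fin n))} (hK : IsCompact K) :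
    volume K ≤ volume (fiberSymm u K) := by
  have hmp := measurePreserving_line_add hu
  have hS := isCompact_fiberSymm u hK
  rw [← hmp.measure_preimage hK.measurableSet.nullMeasurableSet,
    ← hmp.measure_preimage hS.measurableSet.nullMeasurableSet]
  rw [Measure.volume_eq_prod, Measure.prod_apply_symm (hmp.measurable hK.measurableSet),
    Measure.prod_apply_symm (hmp.measurable hS.measurableSet)]
  refine lintegral_mono fun w => ?_
  have hw : ⟪u, (w : EuclideanSpace ℝ (Fin n))⟫ = 0 :=
    Submodule.mem_orthogonal_singleton_iff_inner_right.1 w.2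
  have hcomp : IsCompact {t : ℝ | (w : EuclideanSpace ℝ (Fin n)) + t • u ∈ K} := by
    have hemb : Topology.IsClosedEmbedding
        (fun t : ℝ => (w : EuclideanSpace ℝ (Fin n)) + t • u) := by
      refine Isometry.isClosedEmbedding (Isometry.of_dist_eq fun s t => ?_)
      rw [dist_add_left, dist_eq_norm, ← sub_smul, norm_smul, hu, mul_one, Real.dist_eq,
        Real.norm_eq_abs]
    exact hemb.isCompact_preimage hK
  refine (volume_le_half_difference hcomp).trans (measure_mono ?_)
  rintro _ ⟨⟨s, t⟩, ⟨hs, ht⟩, rfl⟩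
  exact (mem_fiberSymm hu).2 ⟨w, s, t, hw, hs, ht, rfl⟩

/-! ### The compact class of admissible pairs -/

/-- The pairs `(K, L)` of nonempty compact sets inside balls of radii `r` and `s`, with volumes at
least `a` and `b`, such that `[x,y] ≤ 1` for all `x ∈ K`, `y ∈ L`. It lives in the hyperspace of
nonempty compacts with the Vietoris (equivalently, Hausdorff) topology. -/
def admissible (n : ℕ) (a b : ℝ≥0∞) (r s : ℝ) :
    Set (NonemptyCompacts (EuclideanSpace ℝ (Fin n)) ×
      NonemptyCompacts (EuclideanSpace ℝ (Fin n))) :=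
  {P | (P.1 : Set (EuclideanSpace ℝ (Fin n))) ⊆ closedBall 0 r ∧
    (P.2 : Set (EuclideanSpace ℝ (Fin n))) ⊆ closedBall 0 s ∧
    a ≤ volume (P.1 : Set (EuclideanSpace ℝ (Fin n))) ∧
    b ≤ volume (P.2 : Set (EuclideanSpace ℝ (Fin n))) ∧
    ∀ x ∈ P.1, ∀ y ∈ P.2, sinePair x y ≤ 1}

/-- Volume is upper semicontinuous on the hyperspace of compact sets, by outer regularity. -/
theorem isClosed_le_volume {n : ℕ} (a : ℝ≥0∞) :
    IsClosed {K : NonemptyCompacts (EuclideanSpace ℝ (Fin n)) |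
      a ≤ volume (K : Set (EuclideanSpace ℝ (Fin n)))} := by
  rw [← isOpen_compl_iff, isOpen_iff_mem_nhds]
  intro K hK
  obtain ⟨U, hKU, hU, hUa⟩ :=
    (K : Set (EuclideanSpace ℝ (Fin n))).exists_isOpen_lt_of_lt a (not_le.1 hK)
  filter_upwards [(NonemptyCompacts.isOpen_subsets_of_isOpen hU).mem_nhds hKU] with L hL
  exact not_le.2 ((measure_mono hL).trans_lt hUa)

theorem continuous_sinePair {n : ℕ} :
    Continuous fun p : EuclideanSpace ℝ (Fin n) × EuclideanSpace ℝ (Fin n) =>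
      sinePair p.1 p.2 := by
  unfold sinePair
  fun_prop

theorem isClosed_sinePair_le_one {n : ℕ} :
    IsClosed {P : NonemptyCompacts (EuclideanSpace ℝ (Fin n)) ×
      NonemptyCompacts (EuclideanSpace ℝ (Fin n)) |
        ∀ x ∈ P.1, ∀ y ∈ P.2, sinePair x y ≤ 1} := by
  have hopen : IsOpen {p : EuclideanSpace ℝ (Fin n) × EuclideanSpace ℝ (Fin n) |
      1 < sinePair p.1 p.2} := isOpen_lt continuous_const continuous_sinePair
  rw [← isOpen_compl_iff, isOpen_iff_forall_mem_open]
  intro P hP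
  obtain ⟨x, hx, y, hy, hxy⟩ : ∃ x ∈ P.1, ∃ y ∈ P.2, 1 < sinePair x y := by
    by_contra! hcon
    exact hP hcon
  obtain ⟨U, V, hU, hV, hxU, hyV, hUV⟩ := isOpen_prod_iff.1 hopen x y hxy
  refine ⟨_, ?_, (NonemptyCompacts.isOpen_inter_nonempty_of_isOpen hU).prod
    (NonemptyCompacts.isOpen_inter_nonempty_of_isOpen hV),
    mk_mem_prod ⟨x, hx, hxU⟩ ⟨y, hy, hyV⟩⟩
  rintro Q ⟨⟨x₂, hx₂, hxU₂⟩, ⟨y₂, hy₂, hyV₂⟩⟩ hQ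
  have hgt : ((x₂, y₂) : EuclideanSpace ℝ (Fin n) × EuclideanSpace ℝ (Fin n)) ∈
      {p : EuclideanSpace ℝ (Fin n) × EuclideanSpace ℝ (Fin n) | 1 < sinePair p.1 p.2} :=
    hUV (mk_mem_prod hxU₂ hyV₂)
  rw [mem_ofPred_eq] at hgt
  exact absurd (hQ x₂ hx₂ y₂ hy₂) (not_le.2 hgt)

theorem isCompact_admissible {n : ℕ} (a b : ℝ≥0∞) (r s : ℝ) :
    IsCompact (admissible n a b r s) := by
  have hc := (NonemptyCompacts.isCompact_subsets_of_isCompact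
      (isCompact_closedBall (0 : EuclideanSpace ℝ (Fin n)) r)).prod
    (NonemptyCompacts.isCompact_subsets_of_isCompact
      (isCompact_closedBall (0 : EuclideanSpace ℝ (Fin n)) s))
  have h := ((hc.inter_right ((isClosed_le_volume a).preimage continuous_fst)).inter_right
    ((isClosed_le_volume b).preimage continuous_snd)).inter_right isClosed_sinePair_le_one
  convert h using 1
  ext P
  simp only [admissible, mem_inter_iff, mem_prod, mem_preimage, mem_ofPred_eq]
  tauto

/-! ### Shrinking the circumscribed ball -/

/-- Symmetrizing successively in the directions of a finite set `T` keeps the pair admissible, and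
a point of the sphere of radius `R` survives only if it and all of its reflections in `u^⊥`,
`u ∈ T`, were in the original set. -/
theorem exists_admissible_fiberSymm {n : ℕ} {a b : ℝ≥0∞} {r s R : ℝ}
    {P : NonemptyCompacts (EuclideanSpace ℝ (Fin n)) ×
      NonemptyCompacts (EuclideanSpace ℝ (Fin n))}
    (hP : P ∈ admissible n a b r s)
    (hPR : (P.1 : Set (EuclideanSpace ℝ (Fin n))) ⊆ closedBall 0 R)
    (T : Finset (sphere (0 : EuclideanSpace ℝ (Fin n)) 1)) :
    ∃ Q ∈ admissible n a b r s,
      (Q.1 : Set (EuclideanSpace ℝ (Fin n))) ⊆ closedBall 0 R ∧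
      ∀ q ∈ Q.1, ‖q‖ = R → q ∈ P.1 ∧
        ∀ u ∈ T, q - (2 * ⟪(u : EuclideanSpace ℝ (Fin n)), q⟫) • (u : EuclideanSpace ℝ (Fin n))
          ∈ P.1 := by
  classical
  induction T using Finset.induction_on with
  | empty => exact ⟨P, hP, hPR, fun q hq _ => ⟨hq, by simp⟩⟩
  | insert u T _ ih =>
    obtain ⟨Q, ⟨hQ1, hQ2, hQ3, hQ4, hQ5⟩, hQR, hQ⟩ := ih
    have hu : ‖(u : EuclideanSpace ℝ (Fin n))‖ = 1 := mem_sphere_zero_iff_norm.1 u.2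
    refine ⟨(⟨⟨fiberSymm u Q.1, isCompact_fiberSymm _ Q.1.isCompact⟩,
        nonempty_fiberSymm _ Q.1.nonempty⟩,
      ⟨⟨fiberSymm u Q.2, isCompact_fiberSymm _ Q.2.isCompact⟩,
        nonempty_fiberSymm _ Q.2.nonempty⟩),
      ⟨fiberSymm_subset_closedBall hu hQ1, fiberSymm_subset_closedBall hu hQ2,
        hQ3.trans (volume_le_volume_fiberSymm hu Q.1.isCompact),
        hQ4.trans (volume_le_volume_fiberSymm hu Q.2.isCompact),
        sinePair_fiberSymm_le_one hu hQ5⟩,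
      fiberSymm_subset_closedBall hu hQR, ?_⟩
    intro q hq hqR
    obtain ⟨h1, h2⟩ := mem_of_mem_fiberSymm_of_norm_eq hu hQR hq hqR
    refine ⟨(hQ q h1 hqR).1, fun v hv => ?_⟩
    rcases Finset.mem_insert.1 hv with rfl | hv
    · refine (hQ _ h2 ?_).1
      rw [← hqR, ← sq_eq_sq₀ (norm_nonneg _) (norm_nonneg _), norm_sub_sq_real, norm_smul, hu,
        inner_smul_right, real_inner_comm, mul_one, Real.norm_eq_abs, sq_abs]
      ring
    · exact (hQ q h1 hqR).2 v hv

/-- If the first set of an admissible pair misses one point `p` of its circumscribed sphere, then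
finitely many symmetrizations make it miss the whole sphere: every point `q` of the sphere is
carried to `p` by a reflection, and the complement of the set is open. -/
theorem exists_admissible_avoiding_sphere {n : ℕ} {a b : ℝ≥0∞} {r s R : ℝ} (hR : 0 < R)
    {P : NonemptyCompacts (EuclideanSpace ℝ (Fin n)) ×
      NonemptyCompacts (EuclideanSpace ℝ (Fin n))}
    (hP : P ∈ admissible n a b r s)
    (hPR : (P.1 : Set (EuclideanSpace ℝ (Fin n))) ⊆ closedBall 0 R)
    {p : EuclideanSpace ℝ (Fin n)} (hpR : ‖p‖ = R) (hp : p ∉ P.1) :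
    ∃ Q ∈ admissible n a b r s,
      (Q.1 : Set (EuclideanSpace ℝ (Fin n))) ⊆ closedBall 0 R ∧ ∀ q ∈ Q.1, ‖q‖ ≠ R := by
  let O : sphere (0 : EuclideanSpace ℝ (Fin n)) 1 → Set (EuclideanSpace ℝ (Fin n)) := fun u =>
    (P.1 : Set (EuclideanSpace ℝ (Fin n)))ᶜ ∪
      (fun q => q - (2 * ⟪(u : EuclideanSpace ℝ (Fin n)), q⟫) •
        (u : EuclideanSpace ℝ (Fin n))) ⁻¹' (P.1 : Set (EuclideanSpace ℝ (Fin n)))ᶜ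
  have hPo : IsOpen (P.1 : Set (EuclideanSpace ℝ (Fin n)))ᶜ := P.1.isCompact.isClosed.isOpen_compl
  have hO : ∀ u, IsOpen (O u) := fun u => hPo.union (hPo.preimage (by fun_prop))
  have hcover : sphere (0 : EuclideanSpace ℝ (Fin n)) R ⊆ ⋃ u, O u := by
    intro q hq
    have hqR : ‖q‖ = R := mem_sphere_zero_iff_norm.1 hq
    rw [mem_iUnion]
    by_cases hqp : q = p
    · subst hqp
      -- `q` itself is missing from the set, so any unit vector serves as index.
      refine ⟨⟨‖q‖⁻¹ • q, ?_⟩, Or.inl hp⟩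
      rw [mem_sphere_zero_iff_norm, norm_smul, norm_inv, norm_norm, inv_mul_cancel₀]
      rw [hpR]; exact hR.ne'
    · have hne : ‖q - p‖ ≠ 0 := norm_ne_zero_iff.2 (sub_ne_zero.2 hqp)
      -- The reflection in the direction of `q - p` carries `q` to `p`, as `‖q‖ = ‖p‖`.
      refine ⟨⟨‖q - p‖⁻¹ • (q - p), ?_⟩, Or.inr ?_⟩
      · rw [mem_sphere_zero_iff_norm, norm_smul, norm_inv, norm_norm, inv_mul_cancel₀ hne]
      · have key : q - (2 * ⟪‖q - p‖⁻¹ • (q - p), q⟫) • (‖q - p‖⁻¹ • (q - p)) = p := by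
          have h1 : 2 * ⟪q - p, q⟫ = ‖q - p‖ ^ 2 := by
            rw [norm_sub_sq_real, inner_sub_left, real_inner_self_eq_norm_sq, hqR, hpR,
              real_inner_comm]
            ring
          rw [real_inner_smul_left, smul_smul]
          have h2 : 2 * (‖q - p‖⁻¹ * ⟪q - p, q⟫) * ‖q - p‖⁻¹ = 1 := by
            calc 2 * (‖q - p‖⁻¹ * ⟪q - p, q⟫) * ‖q - p‖⁻¹
                = (2 * ⟪q - p, q⟫) * ‖q - p‖⁻¹ ^ 2 := by ring
              _ = 1 := by rw [h1]; field_simp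
          rw [h2, one_smul, sub_sub_cancel]
        rw [mem_preimage]
        simp only
        rw [key]
        exact hp
  obtain ⟨T, hT⟩ := (isCompact_sphere _ _).elim_finite_subcover O hO hcover
  obtain ⟨Q, hQ, hQR, hQT⟩ := exists_admissible_fiberSymm hP hPR T
  refine ⟨Q, hQ, hQR, fun q hq hqR => ?_⟩
  obtain ⟨h1, h2⟩ := hQT q hq hqR
  obtain ⟨u, hu, hqu⟩ := mem_iUnion₂.1 (hT (mem_sphere_zero_iff_norm.2 hqR))
  rcases hqu with h | h
  · exact h h1
  · exact h (h2 u hu)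

/-- Some admissible pair has a first set containing its whole circumscribed sphere, namely one for
which the circumradius of the first set is minimal. -/
theorem exists_admissible_sphere_subset {n : ℕ} (hn : 2 ≤ n) {a b : ℝ≥0∞} (ha : 0 < a) {r s : ℝ}
    (hne : (admissible n a b r s).Nonempty) :
    ∃ P ∈ admissible n a b r s, ∃ R : ℝ, 0 < R ∧
      (P.1 : Set (EuclideanSpace ℝ (Fin n))) ⊆ closedBall 0 R ∧
      sphere (0 : EuclideanSpace ℝ (Fin n)) R ⊆ P.1 := by
  have : Nonempty (Fin n) := ⟨⟨0, by omega⟩⟩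
  -- The Hausdorff distance from `K` to `{0}` is the circumradius `max {‖x‖ | x ∈ K}`.
  obtain ⟨P, hP, hmin⟩ := (isCompact_admissible a b r s).exists_isMinOn hne
    (f := fun P => dist P.1 {(0 : EuclideanSpace ℝ (Fin n))})
    (by fun_prop)
  have hball : (P.1 : Set (EuclideanSpace ℝ (Fin n))) ⊆
      closedBall 0 (dist P.1 {(0 : EuclideanSpace ℝ (Fin n))}) := by
    intro x hx
    have h := infDist_le_hausdorffDist_of_mem hx
      (hausdorffEDist_ne_top_of_nonempty_of_bounded P.1.nonempty (singleton_nonempty 0)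
        P.1.isCompact.isBounded Bornology.isBounded_singleton)
    rwa [infDist_singleton] at h
  have hR : 0 < dist P.1 {(0 : EuclideanSpace ℝ (Fin n))} := by
    by_contra hR
    have h0 : dist P.1 {(0 : EuclideanSpace ℝ (Fin n))} = 0 := le_antisymm (not_lt.1 hR) dist_nonneg
    rw [h0, closedBall_zero] at hball
    have := ha.trans_le (hP.2.2.1.trans (measure_mono hball))
    simp at this
  refine ⟨P, hP, _, hR, hball, ?_⟩
  intro p hp
  by_contra hpP
  obtain ⟨Q, hQ, hQR, hQS⟩ := exists_admissible_avoiding_sphere hR hP hball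
    (mem_sphere_zero_iff_norm.1 hp) hpP
  obtain ⟨m, hm, hmax⟩ := Q.1.isCompact.exists_isMaxOn Q.1.nonempty continuous_norm.continuousOn
  have hlt : ‖m‖ < dist P.1 {(0 : EuclideanSpace ℝ (Fin n))} :=
    lt_of_le_of_ne (mem_closedBall_zero_iff.1 (hQR hm)) (hQS m hm)
  have hle : dist Q.1 {(0 : EuclideanSpace ℝ (Fin n))} ≤ ‖m‖ := by
    rw [NonemptyCompacts.dist_eq]
    refine hausdorffDist_le_of_mem_dist (norm_nonneg _) ?_ ?_
    · intro x hx
      exact ⟨0, rfl, by simpa using hmax hx⟩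
    · rintro x hx
      obtain rfl : x = 0 := hx
      exact ⟨m, hm, by simp⟩
  exact absurd (hmin hQ) (not_le.2 (hle.trans_lt hlt))

/-! ### The inequality -/

theorem exists_unit_orthogonal {n : ℕ} (hn : 2 ≤ n) (x : EuclideanSpace ℝ (Fin n)) :
    ∃ e : EuclideanSpace ℝ (Fin n), ‖e‖ = 1 ∧ ⟪x, e⟫ = 0 := by
  have hbot : (Submodule.span ℝ {x})ᗮ ≠ ⊥ := by
    intro h
    have h1 := Submodule.finrank_add_finrank_orthogonal (Submodule.span ℝ {x})
    rw [h, finrank_bot, finrank_euclideanSpace_fin] at h1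
    have h2 := finrank_span_le_card (R := ℝ) ({x} : Set (EuclideanSpace ℝ (Fin n)))
    simp only [toFinset_singleton, Finset.card_singleton] at h2
    omega
  obtain ⟨e, he, he0⟩ := Submodule.exists_mem_ne_zero_of_ne_bot hbot
  have hx : ⟪x, e⟫ = 0 := Submodule.mem_orthogonal_singleton_iff_inner_right.1 he
  refine ⟨‖e‖⁻¹ • e, ?_, ?_⟩
  · rw [norm_smul, norm_inv, norm_norm, inv_mul_cancel₀ (norm_ne_zero_iff.2 he0)]
  · rw [inner_smul_right, hx, mul_zero]

theorem volume_mul_volume_closedBall {n : ℕ} (hn : 2 ≤ n) {R : ℝ} (hR : 0 < R) :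
    volume (closedBall (0 : EuclideanSpace ℝ (Fin n)) R) *
      volume (closedBall (0 : EuclideanSpace ℝ (Fin n)) R⁻¹) =
      ENNReal.ofReal (omegaVol n ^ 2) := by
  have : Nonempty (Fin n) := ⟨⟨0, by omega⟩⟩
  have hG : 0 < Real.Gamma ((n : ℝ) / 2 + 1) := Real.Gamma_pos_of_pos (by positivity)
  rw [EuclideanSpace.volume_closedBall, EuclideanSpace.volume_closedBall, Fintype.card_fin,
    ← ENNReal.ofReal_pow hR.le, ← ENNReal.ofReal_pow (by positivity),
    ← ENNReal.ofReal_mul (by positivity), ← ENNReal.ofReal_mul (by positivity),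
    ← ENNReal.ofReal_mul (by positivity)]
  congr 1
  have hsq : √Real.pi ^ n = Real.pi ^ ((n : ℝ) / 2) := by
    rw [Real.sqrt_eq_rpow, ← Real.rpow_natCast, ← Real.rpow_mul Real.pi_pos.le]
    congr 1
    ring
  rw [omegaVol, hsq, add_comm (1 : ℝ)]
  have hRn : R ^ n * R⁻¹ ^ n = 1 := by rw [← mul_pow, mul_inv_cancel₀ hR.ne', one_pow]
  linear_combination (Real.pi ^ ((n : ℝ) / 2) / Real.Gamma ((n : ℝ) / 2 + 1)) ^ 2 * hRn

theorem volume_mul_volume_le_of_isCompact {n : ℕ} (hn : 2 ≤ n)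
    {K L : Set (EuclideanSpace ℝ (Fin n))} (hK : IsCompact K) (hL : IsCompact L)
    (h : ∀ x ∈ K, ∀ y ∈ L, sinePair x y ≤ 1) :
    volume K * volume L ≤ ENNReal.ofReal (omegaVol n ^ 2) := by
  rcases eq_zero_or_pos (volume K) with hK0 | hK0
  · simp [hK0]
  rcases eq_zero_or_pos (volume L) with hL0 | hL0
  · simp [hL0]
  have hKne : K.Nonempty := nonempty_of_measure_ne_zero hK0.ne'
  have hLne : L.Nonempty := nonempty_of_measure_ne_zero hL0.ne'
  obtain ⟨r, hr⟩ := hK.isBounded.subset_closedBall 0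
  obtain ⟨s, hs⟩ := hL.isBounded.subset_closedBall 0
  obtain ⟨P, ⟨-, -, hP1, hP2, hP3⟩, R, hR, hPR, hSP⟩ :=
    exists_admissible_sphere_subset hn hK0 (b := volume L) (r := r) (s := s)
      ⟨(⟨⟨K, hK⟩, hKne⟩, ⟨⟨L, hL⟩, hLne⟩), hr, hs, le_rfl, le_rfl, h⟩
  -- For `y ∈ L` and `x ⊥ y` on the sphere of radius `R`, `[x,y] = R ‖y‖`.
  have hP2R : (P.2 : Set (EuclideanSpace ℝ (Fin n))) ⊆ closedBall 0 R⁻¹ := by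
    intro y hy
    obtain ⟨e, he, hye⟩ := exists_unit_orthogonal hn y
    have hmem : R • e ∈ P.1 := hSP (by
      rw [mem_sphere_zero_iff_norm, norm_smul, he, mul_one, Real.norm_of_nonneg hR.le])
    have h1 := (sinePair_le_one_iff _ _).1 (hP3 _ hmem y hy)
    rw [real_inner_smul_left, real_inner_comm, hye, norm_smul, he, mul_one,
      Real.norm_of_nonneg hR.le, mul_zero, zero_pow two_ne_zero, sub_zero, ← mul_pow,
      sq_le_one_iff₀ (by positivity)] at h1
    rw [mem_closedBall_zero_iff]
    rwa [← one_div, le_div_iff₀' hR]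
  calc volume K * volume L ≤ _ := mul_le_mul' hP1 hP2
    _ ≤ _ := mul_le_mul' (measure_mono hPR) (measure_mono hP2R)
    _ = _ := volume_mul_volume_closedBall hn hR

theorem isClosed_sinePolar {n : ℕ} (K : Set (EuclideanSpace ℝ (Fin n))) :
    IsClosed (sinePolar K) := by
  have hcont : ∀ y : EuclideanSpace ℝ (Fin n), Continuous fun x => sinePair x y := fun y => by
    unfold sinePair
    fun_prop
  simp only [sinePolar, ofPred_forall]
  exact isClosed_biInter fun y _ => isClosed_le (hcont y) continuous_const

theorem sinePair_comm {n : ℕ} (x y : EuclideanSpace ℝ (Fin n)) : sinePair x y = sinePair y x := by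
  rw [sinePair, sinePair, real_inner_comm, mul_comm]

/-- the sine Blaschke–Santaló inequality. -/
theorem sine_blaschke_santalo {n : ℕ} (hn : 2 ≤ n) {K : Set (EuclideanSpace ℝ (Fin n))}
    (hb : Bornology.IsBounded K) (hK : MeasurableSet K)
    (h1 : ∀ v : EuclideanSpace ℝ (Fin n), ¬ K ⊆ ↑(Submodule.span ℝ {v})) :
    volume K * volume (sinePolar K) ≤ ENNReal.ofReal (omegaVol n ^ 2) := by
  rw [hK.measure_eq_iSup_isCompact,
    (isClosed_sinePolar K).measurableSet.measure_eq_iSup_isCompact]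
  simp only [ENNReal.iSup_mul, ENNReal.mul_iSup, iSup_le_iff]
  intro L hL hLc A hA hAc
  refine volume_mul_volume_le_of_isCompact hn hAc hLc ?_
  intro x hx y hy
  rw [sinePair_comm]
  exact hL hy x (hA hx)
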